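/- Assume K is algebraically closed. Let (ρ,σ) be a direction with ρ > 0 and ρ + σ < 0, let R, G₁ ∈ K[x,y] be nonzero (ρ,σ)-homogeneous polynomials with [R,G₁] = R², set u := v_{ρ,σ}(R), v := v_{ρ,σ}(G₁), and let r, g ∈ K[z] be defined by r := Σ_{(α,β)∈Supp(R)} R_{α,β}·z^β and g := Σ_{(α,β)∈Supp(G₁)} (G₁)_{α,β}·z^β. If deg(g) ≤ deg(r) + 1 and r has at least two distinct roots in K, then there exists a root λ of r such that u·t − v·s = 0, where s is the multiplicity of λ as a root of r and t is the multiplicity of λ as a root of g. -/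

import Mathlib

open MvPolynomial

noncomputable section

variable {K : Type*} [Field K] [CharZero K]

/-- The support of `P` as a set of pairs `(i,j)` of exponents of `x^i y^j`. -/
def Supp (P : MvPolynomial (Fin 2) K) : Set (ℕ × ℕ) :=
  {p | MvPolynomial.coeff (Finsupp.single 0 p.1 + Finsupp.single 1 p.2) P ≠ 0}

/-- The Jacobian bracket `[P,Q] = ∂ₓP ∂_yQ − ∂ₓQ ∂_yP`. -/
def Jb (P Q : MvPolynomial (Fin 2) K) : MvPolynomial (Fin 2) K :=
  pderiv 0 P * pderiv 1 Q - pderiv 0 Q * pderiv 1 P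

/-- The `(ρ,σ)`-degree `v_{ρ,σ}(P)` (the maximum of `ρi+σj` on the support). -/
def wdeg (ρ σ : ℤ) (P : MvPolynomial (Fin 2) K) : ℤ :=
  sSup {d : ℤ | ∃ p ∈ Supp P, d = ρ * (p.1 : ℤ) + σ * (p.2 : ℤ)}

/-- The support of the `(ρ,σ)`-leading form of `P`. -/
def LeadSupp (ρ σ : ℤ) (P : MvPolynomial (Fin 2) K) : Set (ℕ × ℕ) :=
  {p | p ∈ Supp P ∧ ρ * (p.1 : ℤ) + σ * (p.2 : ℤ) = wdeg ρ σ P}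

/-- `P` is `(ρ,σ)`-homogeneous. -/
def IsHomog (ρ σ : ℤ) (P : MvPolynomial (Fin 2) K) : Prop :=
  ∀ p ∈ Supp P, ∀ q ∈ Supp P,
    ρ * (p.1 : ℤ) + σ * (p.2 : ℤ) = ρ * (q.1 : ℤ) + σ * (q.2 : ℤ)

/-- `P` is a monomial: its support has at most one point. -/
def IsMonomial (P : MvPolynomial (Fin 2) K) : Prop := (Supp P).Subsingleton

/-- `e` is the point `en_{ρ,σ}(P)`: the point of the support of the leading form
with largest second coordinate. -/
def IsEn (ρ σ : ℤ) (P : MvPolynomial (Fin 2) K) (e : ℕ × ℕ) : Prop :=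
  e ∈ LeadSupp ρ σ P ∧ ∀ q ∈ LeadSupp ρ σ P, q.2 ≤ e.2

/-- `e` is the point `st_{ρ,σ}(P)`: the point of the support of the leading form
with smallest second coordinate. -/
def IsSt (ρ σ : ℤ) (P : MvPolynomial (Fin 2) K) (e : ℕ × ℕ) : Prop :=
  e ∈ LeadSupp ρ σ P ∧ ∀ q ∈ LeadSupp ρ σ P, e.2 ≤ q.2

/-- The univariate polynomial `r ∈ K[z]` associated to a `(ρ,σ)`-homogeneous `P`:
`r = Σ_{(α,β) ∈ Supp P} P_{α,β} z^β`. -/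
def ypoly (P : MvPolynomial (Fin 2) K) : Polynomial K :=
  ∑ m ∈ P.support, Polynomial.C (MvPolynomial.coeff m P) * Polynomial.X ^ (m 1)

/-! Setting `x = 1` turns `P` into `ypoly P`. For weighted homogeneous polynomials Euler's identity
eliminates `∂ₓ` from the bracket, so `[R,G] = R²` becomes the differential equation
`u r g' - v g r' = ρ r²`. At a root of multiplicity `s` of `r` and `t` of `g`, the left side has
lowest-order term of order `s + t - 1` with coefficient a nonzero multiple of `u t - v s`, while the
right side has order `2 s`. So if `u t - v s` never vanished, `t = s + 1` would hold at every root
of `r`, and summing over the roots would give `deg g ≥ deg r + #{roots of r} ≥ deg r + 2`. -/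

section ChainRule

theorem derivation_aeval {A B M ι : Type*} [CommSemiring A] [CommSemiring B] [Algebra A B]
    [AddCommMonoid M] [Module A M] [Module B M] [IsScalarTower A B M] [Fintype ι]
    (D : Derivation A B M) (f : ι → B) (P : MvPolynomial ι A) :
    D (aeval f P) = ∑ i, aeval f (pderiv i P) • D (f i) := by
  classical
  induction P using MvPolynomial.induction_on with
  | C a => simp
  | add P Q hP hQ => simp only [map_add, hP, hQ, add_smul, Finset.sum_add_distrib]
  | mul_X P j hP =>
    simp only [map_mul, aeval_X, Derivation.leibniz, hP, pderiv_X, smul_eq_mul, map_add, add_smul,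
      Finset.sum_add_distrib, Finset.smul_sum, mul_smul]
    simp [Pi.single_apply]

theorem sum_smul_X_mul_pderiv {A S ι : Type*} [CommSemiring A] [CommSemiring S] [Module S A]
    [Fintype ι] {w : ι → S} {n : S} {P : MvPolynomial ι A} (hP : P.IsWeightedHomogeneous w n) :
    ∑ i, w i • (X i * pderiv i P) = n • P := by
  have on_monomial (m : ι →₀ ℕ) (hm : m ∈ P.support) :
      ∑ i, w i • (X i * pderiv i (monomial m (P.coeff m))) = n • monomial m (P.coeff m) := by
    simp_rw [X_mul_pderiv_monomial, ← hP (mem_support_iff.mp hm), Finsupp.weight_eq_sum,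
      Finset.sum_smul, smul_assoc, smul_comm (w _)]
  rw [P.as_sum]
  simp only [map_sum, Finset.mul_sum, Finset.smul_sum]
  rw [Finset.sum_comm]
  exact Finset.sum_congr rfl on_monomial

end ChainRule

section WeightedWronskian

variable {A : Type*} [CommRing A]

/-- The Wronskian `u f g' - v g f'` of `f` and `g` with weights `u` and `v`. Up to the
factor `ρ`, it is what the Jacobian bracket of `(ρ,σ)`-homogeneous polynomials of degrees `u` and
`v` becomes on the line `x = 1`. -/
def weightedWronskian (u v : A) (f g : Polynomial A) : Polynomial A :=
  Polynomial.C u * f * Polynomial.derivative g - Polynomial.C v * g * Polynomial.derivative f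

theorem X_sub_C_mul_derivative_X_sub_C_pow (l : A) (n : ℕ) :
    (Polynomial.X - Polynomial.C l) * Polynomial.derivative ((Polynomial.X - Polynomial.C l) ^ n)
      = Polynomial.C (n : A) * (Polynomial.X - Polynomial.C l) ^ n := by
  cases n with
  | zero => simp
  | succ n => rw [Polynomial.derivative_X_sub_C_pow, Nat.add_sub_cancel]; ring

theorem X_sub_C_mul_weightedWronskian (u v l : A) (s t : ℕ) (a b : Polynomial A) :
    (Polynomial.X - Polynomial.C l) * weightedWronskian u v
        ((Polynomial.X - Polynomial.C l) ^ s * a) ((Polynomial.X - Polynomial.C l) ^ t * b)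
      = (Polynomial.C (u * t - v * s) * (a * b)
          + (Polynomial.X - Polynomial.C l) * weightedWronskian u v a b)
        * (Polynomial.X - Polynomial.C l) ^ (s + t) := by
  have hs := X_sub_C_mul_derivative_X_sub_C_pow l s
  have ht := X_sub_C_mul_derivative_X_sub_C_pow l t
  simp only [weightedWronskian, Polynomial.derivative_mul, Polynomial.C_sub, Polynomial.C_mul]
  set L := Polynomial.X - Polynomial.C l
  linear_combination Polynomial.C u * L ^ s * a * b * ht - Polynomial.C v * L ^ t * a * b * hs

variable [IsDomain A]

theorem rootMultiplicity_weightedWronskian_add_one {u v : A} {f g : Polynomial A} (hf : f ≠ 0)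
    (hg : g ≠ 0) {l : A} (hne : u * g.rootMultiplicity l - v * f.rootMultiplicity l ≠ 0) :
    (weightedWronskian u v f g).rootMultiplicity l + 1
      = f.rootMultiplicity l + g.rootMultiplicity l := by
  obtain ⟨a, ha, ha'⟩ := f.exists_eq_pow_rootMultiplicity_mul_and_not_dvd hf l
  obtain ⟨b, hb, hb'⟩ := g.exists_eq_pow_rootMultiplicity_mul_and_not_dvd hg l
  rw [Polynomial.dvd_iff_isRoot, Polynomial.IsRoot.def] at ha' hb'
  set s := f.rootMultiplicity l
  set t := g.rootMultiplicity l
  set c := Polynomial.C (u * t - v * s) * (a * b)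
    + (Polynomial.X - Polynomial.C l) * weightedWronskian u v a b with hc
  have hfactor : weightedWronskian u v f g * (Polynomial.X - Polynomial.C l) ^ 1
      = c * (Polynomial.X - Polynomial.C l) ^ (s + t) := by
    rw [pow_one, mul_comm, ha, hb, X_sub_C_mul_weightedWronskian]
  have hcl : ¬ c.IsRoot l := by
    simpa [hc, Polynomial.IsRoot.def] using ⟨hne, ha', hb'⟩
  have hc0 : c ≠ 0 := fun h => hcl (by simp [h])
  have hw : weightedWronskian u v f g ≠ 0 := fun h =>
    mul_ne_zero hc0 (pow_ne_zero _ (Polynomial.X_sub_C_ne_zero l)) (by rw [← hfactor, h, zero_mul])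
  rw [← Polynomial.rootMultiplicity_mul_X_sub_C_pow hw, hfactor,
    Polynomial.rootMultiplicity_mul_X_sub_C_pow hc0, Polynomial.rootMultiplicity_eq_zero hcl,
    zero_add]

theorem rootMultiplicity_eq_add_one_of_weightedWronskian_eq {u v c : A} {f g : Polynomial A}
    (hc : c ≠ 0) (hf : f ≠ 0) (h : weightedWronskian u v f g = Polynomial.C c * f ^ 2) {l : A}
    (hne : u * g.rootMultiplicity l - v * f.rootMultiplicity l ≠ 0) :
    g.rootMultiplicity l = f.rootMultiplicity l + 1 := by
  have hg : g ≠ 0 := by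
    rintro rfl
    refine mul_ne_zero (Polynomial.C_ne_zero.mpr hc) (pow_ne_zero 2 hf) (h.symm.trans ?_)
    simp [weightedWronskian]
  have hmul := rootMultiplicity_weightedWronskian_add_one hf hg hne
  have hsq : (weightedWronskian u v f g).rootMultiplicity l = 2 * f.rootMultiplicity l := by
    classical
    rw [h, ← Polynomial.count_roots, Polynomial.roots_C_mul _ hc, Polynomial.roots_pow,
      Multiset.count_nsmul, Polynomial.count_roots]
  lia

theorem one_lt_card_roots_toFinset [DecidableEq A] {f : Polynomial A} (hf : f ≠ 0)
    (h : ∃ l₁ l₂, l₁ ≠ l₂ ∧ f.IsRoot l₁ ∧ f.IsRoot l₂) : 1 < f.roots.toFinset.card := by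
  obtain ⟨l₁, l₂, hne, h₁, h₂⟩ := h
  exact Finset.one_lt_card.mpr ⟨l₁, by simpa [hf] using h₁, l₂, by simpa [hf] using h₂, hne⟩

theorem natDegree_add_card_roots_toFinset_le [DecidableEq A] {f g : Polynomial A} (hf : f.Splits)
    (h : ∀ l, f.IsRoot l → f.rootMultiplicity l < g.rootMultiplicity l) :
    f.natDegree + f.roots.toFinset.card ≤ g.natDegree := by
  have hle : f.roots + f.roots.dedup ≤ g.roots := by
    refine Multiset.le_iff_count.mpr fun l => ?_
    rw [Multiset.count_add, Multiset.count_dedup, Polynomial.count_roots, Polynomial.count_roots]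
    split_ifs with hl
    · exact h l (Polynomial.isRoot_of_mem_roots hl)
    · simp [← Polynomial.count_roots, Multiset.count_eq_zero_of_notMem hl]
  calc f.natDegree + f.roots.toFinset.card
      = (f.roots + f.roots.dedup).card := by
        rw [Multiset.card_add, ← hf.natDegree_eq_card_roots, Multiset.card_toFinset]
    _ ≤ g.roots.card := Multiset.card_le_card hle
    _ ≤ g.natDegree := g.card_roots'

theorem exists_isRoot_of_weightedWronskian_eq [DecidableEq A] {u v c : A} {f g : Polynomial A}
    (hc : c ≠ 0) (hf : f ≠ 0) (hsplits : f.Splits)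
    (h : weightedWronskian u v f g = Polynomial.C c * f ^ 2)
    (hdeg : g.natDegree < f.natDegree + f.roots.toFinset.card) :
    ∃ l, f.IsRoot l ∧ u * g.rootMultiplicity l - v * f.rootMultiplicity l = 0 := by
  by_contra! hne
  refine hdeg.not_ge (natDegree_add_card_roots_toFinset_le hsplits fun l hl => ?_)
  have := rootMultiplicity_eq_add_one_of_weightedWronskian_eq hc hf h (hne l hl)
  lia

end WeightedWronskian

section Homogeneous

variable {F : Type*} [Field F] {ρ σ u v : ℤ} {P Q : MvPolynomial (Fin 2) F}

theorem mem_Supp_of_mem_support {m : Fin 2 →₀ ℕ} (hm : m ∈ P.support) : (m 0, m 1) ∈ Supp P := by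
  have hm_eq : Finsupp.single 0 (m 0) + Finsupp.single 1 (m 1) = m := by
    ext i; fin_cases i <;> simp
  simpa [Supp, hm_eq] using hm

theorem isWeightedHomogeneous_wdeg (hP : IsHomog ρ σ P) :
    P.IsWeightedHomogeneous ![ρ, σ] (wdeg ρ σ P) := by
  intro m hm
  have hmem := mem_Supp_of_mem_support (mem_support_iff.mpr hm)
  have hdegrees : {d : ℤ | ∃ p ∈ Supp P, d = ρ * (p.1 : ℤ) + σ * (p.2 : ℤ)}
      = {ρ * (m 0 : ℤ) + σ * (m 1 : ℤ)} := by
    ext d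
    constructor
    · rintro ⟨p, hp, rfl⟩
      exact hP p hp _ hmem
    · exact fun hd => ⟨_, hmem, hd⟩
  rw [wdeg, hdegrees, csSup_singleton, Finsupp.weight_eq_sum]
  simp [Fin.sum_univ_two, mul_comm]

theorem injOn_support_apply_one (hρ : ρ ≠ 0) (hP : P.IsWeightedHomogeneous ![ρ, σ] u) :
    Set.InjOn (fun m : Fin 2 →₀ ℕ => m 1) P.support := by
  intro m hm n hn (h1 : m 1 = n 1)
  have hweight := (hP (mem_support_iff.mp hm)).trans (hP (mem_support_iff.mp hn)).symm
  have h0 : m 0 = n 0 := by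
    simpa [Finsupp.weight_eq_sum, Fin.sum_univ_two, h1, hρ] using hweight
  ext i
  fin_cases i
  exacts [h0, h1]

theorem ypoly_ne_zero (hρ : ρ ≠ 0) (hP : P.IsWeightedHomogeneous ![ρ, σ] u) (hP0 : P ≠ 0) :
    ypoly P ≠ 0 := by
  obtain ⟨m, hm⟩ := support_nonempty.mpr hP0
  have hcoeff : (ypoly P).coeff (m 1) = P.coeff m := by
    simp only [ypoly, Polynomial.finsetSum_coeff, Polynomial.coeff_C_mul_X_pow]
    rw [Finset.sum_eq_single_of_mem m hm, if_pos rfl]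
    exact fun n hn hne => if_neg fun h => hne (injOn_support_apply_one hρ hP hn hm h.symm)
  intro h0
  rw [h0, Polynomial.coeff_zero] at hcoeff
  exact mem_support_iff.mp hm hcoeff.symm

theorem ypoly_eq_aeval (P : MvPolynomial (Fin 2) F) :
    ypoly P = aeval ![(1 : Polynomial F), Polynomial.X] P := by
  rw [aeval_def, eval₂_eq']
  simp [ypoly, Fin.prod_univ_two]

theorem derivative_ypoly (P : MvPolynomial (Fin 2) F) :
    Polynomial.derivative (ypoly P) = ypoly (pderiv 1 P) := by
  simpa [← ypoly_eq_aeval, Fin.sum_univ_two, Polynomial.derivative'] using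
    derivation_aeval Polynomial.derivative' ![(1 : Polynomial F), Polynomial.X] P

theorem ypoly_euler (hP : P.IsWeightedHomogeneous ![ρ, σ] u) :
    Polynomial.C (ρ : F) * ypoly (pderiv 0 P)
        + Polynomial.C (σ : F) * Polynomial.X * Polynomial.derivative (ypoly P)
      = Polynomial.C (u : F) * ypoly P := by
  rw [derivative_ypoly]
  simp only [ypoly_eq_aeval]
  simpa [Fin.sum_univ_two, mul_assoc] using
    congrArg (aeval ![(1 : Polynomial F), Polynomial.X]) (sum_smul_X_mul_pderiv hP)

theorem weightedWronskian_ypoly (hP : P.IsWeightedHomogeneous ![ρ, σ] u)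
    (hQ : Q.IsWeightedHomogeneous ![ρ, σ] v) :
    weightedWronskian (u : F) v (ypoly P) (ypoly Q) = Polynomial.C (ρ : F) * ypoly (Jb P Q) := by
  have hJb : ypoly (Jb P Q) = ypoly (pderiv 0 P) * Polynomial.derivative (ypoly Q)
      - ypoly (pderiv 0 Q) * Polynomial.derivative (ypoly P) := by
    rw [derivative_ypoly, derivative_ypoly]
    simp only [ypoly_eq_aeval, Jb, map_sub, map_mul]
  rw [weightedWronskian, hJb]
  linear_combination Polynomial.derivative (ypoly P) * ypoly_euler hQ
    - Polynomial.derivative (ypoly Q) * ypoly_euler hP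

theorem stmt7_general [DecidableEq F] (hρ : (ρ : F) ≠ 0) {R G : MvPolynomial (Fin 2) F}
    (hR : R ≠ 0) (hhomR : IsHomog ρ σ R) (hhomG : IsHomog ρ σ G) (hbr : Jb R G = R ^ 2)
    (hsplits : (ypoly R).Splits)
    (hdeg : (ypoly G).natDegree < (ypoly R).natDegree + (ypoly R).roots.toFinset.card) :
    ∃ lam : F, (ypoly R).IsRoot lam ∧
      (wdeg ρ σ R : F) * (ypoly G).rootMultiplicity lam
        - (wdeg ρ σ G : F) * (ypoly R).rootMultiplicity lam = 0 := by
  have hwR := isWeightedHomogeneous_wdeg hhomR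
  have hr : ypoly R ≠ 0 := ypoly_ne_zero (by rintro rfl; simp at hρ) hwR hR
  have hode : weightedWronskian (wdeg ρ σ R : F) (wdeg ρ σ G) (ypoly R) (ypoly G)
      = Polynomial.C (ρ : F) * ypoly R ^ 2 := by
    rw [weightedWronskian_ypoly hwR (isWeightedHomogeneous_wdeg hhomG), hbr]
    simp only [ypoly_eq_aeval, map_pow]
  exact exists_isRoot_of_weightedWronskian_eq hρ hr hsplits hode hdeg

end Homogeneous

/-- Lemma "factores en jacobiano"(3): if `[R,G₁]=R²`, `deg g ≤ deg r + 1` and `r`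
has at least two distinct roots, then some root `λ` of `r` satisfies `u·t − v·s = 0`,
where `s,t` are the multiplicities of `λ` in `r` and `g`. -/
theorem stmt7 (K : Type*) [Field K] [CharZero K] [IsAlgClosed K]
    (ρ σ : ℤ) (hgcd : Int.gcd ρ σ = 1) (hρ : 0 < ρ) (hρσ : ρ + σ < 0)
    (R G₁ : MvPolynomial (Fin 2) K) (hR : R ≠ 0) (hG : G₁ ≠ 0)
    (hhomR : IsHomog ρ σ R) (hhomG : IsHomog ρ σ G₁)
    (hbr : Jb R G₁ = R ^ 2)
    (hdeg : (ypoly G₁).natDegree ≤ (ypoly R).natDegree + 1)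
    (hroots : ∃ lam₁ lam₂ : K, lam₁ ≠ lam₂ ∧ (ypoly R).IsRoot lam₁ ∧ (ypoly R).IsRoot lam₂) :
    ∃ lam : K, (ypoly R).IsRoot lam ∧
      wdeg ρ σ R * ((ypoly G₁).rootMultiplicity lam : ℤ)
        - wdeg ρ σ G₁ * ((ypoly R).rootMultiplicity lam : ℤ) = 0 := by
  classical
  have hcard := one_lt_card_roots_toFinset
    (ypoly_ne_zero hρ.ne' (isWeightedHomogeneous_wdeg hhomR) hR) hroots
  exact_mod_cast stmt7_general (Int.cast_ne_zero.mpr hρ.ne') hR hhomR hhomG hbr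
    (IsAlgClosed.splits _) (by lia)

end
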